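/- The subgroup of the group of bijections of ℝ⁵ generated by the two maps s and t is isomorphic to the alternating group A₅; in particular it has exactly 60 elements. -/

import Mathlib

noncomputable section

/-- Quintuplets `(z₁, z₂, z₃, z₄, z₀)` of real numbers. -/
abbrev R5 : Type := ℝ × ℝ × ℝ × ℝ × ℝ

/-- The bijection `s(z₁,z₂,z₃,z₄,z₀) = (z₀,z₄,z₃,z₂,z₁)`. -/
def sPerm : Equiv.Perm R5 where
  toFun z := (z.2.2.2.2, z.2.2.2.1, z.2.2.1, z.2.1, z.1)
  invFun z := (z.2.2.2.2, z.2.2.2.1, z.2.2.1, z.2.1, z.1)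
  left_inv z := rfl
  right_inv z := rfl

/-- The bijection `t(z₁,z₂,z₃,z₄,z₀) = (z₂,−z₃−1,−z₁−1,z₄,z₀)`. -/
def tPerm : Equiv.Perm R5 where
  toFun z := (z.2.1, -z.2.2.1 - 1, -z.1 - 1, z.2.2.2.1, z.2.2.2.2)
  invFun z := (-z.2.2.1 - 1, z.1, -z.2.1 - 1, z.2.2.2.1, z.2.2.2.2)
  left_inv z := by
    obtain ⟨a, b, c, d, e⟩ := z
    simp only [Prod.mk.injEq, and_true, true_and]
    constructor <;> ring
  right_inv z := by
    obtain ⟨a, b, c, d, e⟩ := z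
    simp only [Prod.mk.injEq, and_true, true_and]
    constructor <;> ring

/-- Centered and sign-adjusted coordinates. -/
def coordE : R5 ≃ (Fin 5 → ℝ) where
  toFun z := ![z.1 + 1/2, z.2.1 + 1/2, -(z.2.2.1 + 1/2), z.2.2.2.1 + 1/2, z.2.2.2.2 + 1/2]
  invFun f := (f 0 - 1/2, f 1 - 1/2, -f 2 - 1/2, f 3 - 1/2, f 4 - 1/2)
  left_inv z := by
    obtain ⟨a, b, c, d, e⟩ := z
    simp
  right_inv f := by
    funext i
    fin_cases i <;> simp

/-- Permutations of coordinates acting on functions. -/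
def permFun : Equiv.Perm (Fin 5) →* Equiv.Perm (Fin 5 → ℝ) where
  toFun g := Equiv.arrowCongr g (Equiv.refl ℝ)
  map_one' := rfl
  map_mul' _ _ := rfl

lemma permFun_inj : Function.Injective permFun := by
  rw [injective_iff_map_eq_one]
  intro g hg
  have h : ∀ i, g.symm i = i := by
    intro i
    have h1 := congrFun (DFunLike.congr_fun hg (fun j : Fin 5 => (j.val : ℝ))) i
    have h2 : (((g.symm i : Fin 5).val : ℕ) : ℝ) = ((i.val : ℕ) : ℝ) := h1
    exact Fin.ext (by exact_mod_cast h2)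
  ext i
  have := h (g i)
  simp only [Equiv.symm_apply_apply] at this
  simp [← this]

/-- The induced action on quintuplets. -/
def phiHom : Equiv.Perm (Fin 5) →* Equiv.Perm R5 :=
  (coordE.symm.permCongrHom : Equiv.Perm (Fin 5 → ℝ) ≃* Equiv.Perm R5).toMonoidHom.comp permFun

lemma phiHom_inj : Function.Injective phiHom :=
  (MulEquiv.injective coordE.symm.permCongrHom).comp permFun_inj

/-- The permutation underlying `s`. -/
def sFin : Equiv.Perm (Fin 5) := Equiv.swap 0 4 * Equiv.swap 1 3

/-- The permutation underlying `t`. -/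
def tFin : Equiv.Perm (Fin 5) := Equiv.swap 0 1 * Equiv.swap 0 2

lemma phiHom_apply (g : Equiv.Perm (Fin 5)) (z : R5) :
    phiHom g z = coordE.symm (fun i => coordE z (g.symm i)) := rfl

lemma phi_s : phiHom sFin = sPerm := by
  ext1 z
  obtain ⟨a, b, c, d, e⟩ := z
  have h0 : sFin.symm 0 = 4 := by decide
  have h1 : sFin.symm 1 = 3 := by decide
  have h2 : sFin.symm 2 = 2 := by decide
  have h3 : sFin.symm 3 = 1 := by decide
  have h4 : sFin.symm 4 = 0 := by decide
  rw [phiHom_apply]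
  simp [coordE, sPerm, h0, h1, h2, h3, h4]

lemma phi_t : phiHom tFin = tPerm := by
  ext1 z
  obtain ⟨a, b, c, d, e⟩ := z
  have h0 : tFin.symm 0 = 1 := by decide
  have h1 : tFin.symm 1 = 2 := by decide
  have h2 : tFin.symm 2 = 0 := by decide
  have h3 : tFin.symm 3 = 3 := by decide
  have h4 : tFin.symm 4 = 4 := by decide
  rw [phiHom_apply]
  simp [coordE, tPerm, h0, h1, h2, h3, h4]
  constructor <;> ring

lemma closure_fin : Subgroup.closure {sFin, tFin} = alternatingGroup (Fin 5) := by
  have hs : sFin ∈ Subgroup.closure {sFin, tFin} := Subgroup.subset_closure (by simp)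
  have ht : tFin ∈ Subgroup.closure {sFin, tFin} := Subgroup.subset_closure (by simp)
  apply le_antisymm
  · rw [Subgroup.closure_le]
    rintro g (rfl | rfl)
    · rw [SetLike.mem_coe, Equiv.Perm.mem_alternatingGroup]; decide
    · rw [SetLike.mem_coe, Equiv.Perm.mem_alternatingGroup]; decide
  · have htr : MulAction.IsPretransitive (Subgroup.closure {sFin, tFin}) (Fin 5) := by
      constructor
      intro x y
      have key : ∀ x y : Fin 5, ∃ n : Fin 5, ((sFin * tFin) ^ n.val) x = y := by decide
      obtain ⟨n, hn⟩ := key x y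
      exact ⟨⟨(sFin * tFin) ^ n.val, pow_mem (mul_mem hs ht) _⟩, hn⟩
    have hp : MulAction.IsPreprimitive (Subgroup.closure {sFin, tFin}) (Fin 5) :=
      MulAction.IsPreprimitive.of_prime_card (by rw [Nat.card_fin]; norm_num)
    refine Equiv.Perm.alternatingGroup_le_of_isPreprimitive_of_isThreeCycle_mem hp ?_ ht
    exact Equiv.Perm.isThreeCycle_swap_mul_swap_same (by decide) (by decide) (by decide)

theorem stmt2 :
    Nonempty ((Subgroup.closure {sPerm, tPerm} : Subgroup (Equiv.Perm R5)) ≃*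
      alternatingGroup (Fin 5)) ∧
    Nat.card (Subgroup.closure {sPerm, tPerm} : Subgroup (Equiv.Perm R5)) = 60 := by
  have hmap : (alternatingGroup (Fin 5)).map phiHom = Subgroup.closure {sPerm, tPerm} := by
    rw [← closure_fin, MonoidHom.map_closure, Set.image_pair, phi_s, phi_t]
  rw [← hmap]
  have e := (alternatingGroup (Fin 5)).equivMapOfInjective phiHom phiHom_inj
  refine ⟨⟨e.symm⟩, ?_⟩
  rw [← Nat.card_congr e.toEquiv, nat_card_alternatingGroup, Nat.card_fin]
  decide
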